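/- For all named GS4 derivations P with conclusion ⊢Γ, the vertex set of the branch-labeled axiom graph is the name set of the conclusion and its branch set is included in that of the conclusion: V_{⟨⟨P⟩⟩} = names(Γ) and Br(⟨⟨P⟩⟩) ⊆ Br(Γ). -/

import Mathlib

open scoped Classical

noncomputable section

namespace GS4

/-- Named classical propositional formulas over atoms `α`, with names in `ℕ`. -/
inductive NForm (α : Type) : Type
  | atom : ℕ → α → NForm α
  | or   : NForm α → NForm α → NForm α
  | and  : NForm α → NForm α → NForm α

variable {α : Type}

/-- Name-preserving De Morgan negation, w.r.t. an involution `bar` on atoms. -/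
def negF (bar : α → α) : NForm α → NForm α
  | .atom x a => .atom x (bar a)
  | .or A B => .and (negF bar A) (negF bar B)
  | .and A B => .or (negF bar A) (negF bar B)

/-- The set of names occurring in a named formula. -/
def NForm.names : NForm α → Set ℕ
  | .atom x _ => {x}
  | .or A B => A.names ∪ B.names
  | .and A B => A.names ∪ B.names

/-- A named formula is sharing-free if every name occurs at most once in it. -/
def NForm.sharingFree : NForm α → Prop
  | .atom _ _ => True
  | .or A B => A.sharingFree ∧ B.sharingFree ∧ Disjoint A.names B.names
  | .and A B => A.sharingFree ∧ B.sharingFree ∧ Disjoint A.names B.names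

def NForm.isAtom : NForm α → Prop
  | .atom _ _ => True
  | _ => False

/-- Anonymous formulas (shapes): `A ≡ B` iff their shapes coincide. -/
inductive Shape (α : Type) : Type
  | atom : α → Shape α
  | or   : Shape α → Shape α → Shape α
  | and  : Shape α → Shape α → Shape α

def NForm.shape : NForm α → Shape α
  | .atom _ a => .atom a
  | .or A B => .or A.shape B.shape
  | .and A B => .and A.shape B.shape

/-- `HasAtom A x a`: the atomic formula `x:a` occurs in `A`. -/
def HasAtom : NForm α → ℕ → α → Prop
  | .atom y b, x, a => y = x ∧ b = a
  | .or A B, x, a => HasAtom A x a ∨ HasAtom B x a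
  | .and A B, x, a => HasAtom A x a ∨ HasAtom B x a

/-- Names of a finite set of named formulas. -/
def snames (Γ : Finset (NForm α)) : Set ℕ := ⋃ A ∈ Γ, A.names

/-- A finite set of named formulas is sharing-free if all its elements are
sharing-free with pairwise disjoint name sets. -/
def SFSet (Γ : Finset (NForm α)) : Prop :=
  (∀ A ∈ Γ, A.sharingFree) ∧
  ∀ A ∈ Γ, ∀ B ∈ Γ, A ≠ B → Disjoint A.names B.names

/-- `x:a` occurs in some formula of `Γ` (i.e. `Γ[x] = a` for sharing-free `Γ`). -/
def HasAtomS (Γ : Finset (NForm α)) (x : ℕ) (a : α) : Prop :=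
  ∃ A ∈ Γ, HasAtom A x a

/-- Branch sets of named formulas. -/
def BrF : NForm α → Set (Set ℕ)
  | .atom x _ => {{x}}
  | .or A B => {X | ∃ Y ∈ BrF A, ∃ Z ∈ BrF B, X = Y ∪ Z}
  | .and A B => BrF A ∪ BrF B

/-- Branch sets of sequents (finite sharing-free sets of named formulas). -/
def BrS (Γ : Finset (NForm α)) : Set (Set ℕ) :=
  {X | X ⊆ snames Γ ∧ ∀ A ∈ Γ, X ∩ A.names ∈ BrF A}

/-! ## Branch-labeled name graphs -/

/-- A branch-labeled name graph: vertices and a relation between unordered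
pairs of vertices and branch labels. -/
structure BLGraph : Type where
  verts : Set ℕ
  rel : Sym2 ℕ → Set ℕ → Prop

/-- Well-formedness of a bl-graph: related pairs consist of distinct vertices,
labels are sets of vertices, and each edge is included in its labels. -/
def BLGraph.IsBL (G : BLGraph) : Prop :=
  ∀ e X, G.rel e X → ¬ e.IsDiag ∧ X ⊆ G.verts ∧ ∀ v ∈ e, v ∈ X

def BLGraph.Edges (G : BLGraph) : Set (Sym2 ℕ) := {e | ∃ X, G.rel e X}

def BLGraph.Br (G : BLGraph) : Set (Set ℕ) := {X | ∃ e, G.rel e X}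

def BLGraph.union (G H : BLGraph) : BLGraph :=
  ⟨G.verts ∪ H.verts, fun e X => G.rel e X ∨ H.rel e X⟩

/-- Restriction `G↾_S` of a bl-graph. -/
def BLGraph.restrict (G : BLGraph) (S : Set ℕ) : BLGraph :=
  ⟨G.verts ∩ S, fun e X => G.rel e X ∧ X ⊆ S⟩

/-- The interface-relativized edge-branch relation `e ⊰^I_G X`. -/
def BLGraph.relI (G : BLGraph) (I : Set ℕ) (e : Sym2 ℕ) (X : Set ℕ) : Prop :=
  ∃ Y, G.rel e Y ∧ X = Y \ I

/-- `z 0, …, z (n-1)` is an `X`-labeled alternating path between `G` and `H`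
through the interface `I`. -/
def AltPath (G H : BLGraph) (I X : Set ℕ) (n : ℕ) (z : ℕ → ℕ) : Prop :=
  1 < n ∧
  (∀ i < n, ∀ j < n, z i = z j → i = j) ∧
  (∀ i, 0 < i → i + 1 < n → z i ∈ I) ∧
  ((∀ i, i + 1 < n →
      (Even i → G.relI I s(z i, z (i + 1)) X) ∧ (¬ Even i → H.relI I s(z i, z (i + 1)) X)) ∨
   (∀ i, i + 1 < n →
      (Even i → H.relI I s(z i, z (i + 1)) X) ∧ (¬ Even i → G.relI I s(z i, z (i + 1)) X)))

/-- Composition of bl-graphs over an interface `I`. -/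
def BLGraph.comp (G H : BLGraph) (I : Set ℕ) : BLGraph :=
  ⟨(G.verts ∪ H.verts) \ I,
   fun e X => ∃ n z, AltPath G H I X n z ∧ z 0 ∉ I ∧ z (n - 1) ∉ I ∧
     e = s(z 0, z (n - 1))⟩

/-- The weakening operator on bl-graphs: add vertices `V` and extend every
branch label by a member of `Brs`. -/
def blwk (V : Set ℕ) (Brs : Set (Set ℕ)) (G : BLGraph) : BLGraph :=
  ⟨G.verts ∪ V, fun e X => ∃ Y Z, G.rel e Y ∧ Z ∈ Brs ∧ X = Y ∪ Z⟩

/-- The bl-identity graph `id_{A,C}` on a pair of dual formulas. -/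
def blid : NForm α → NForm α → BLGraph
  | .atom x _, .atom y _ => ⟨{x, y}, fun e X => e = s(x, y) ∧ X = {x, y}⟩
  | .or A1 A2, .and C1 C2 =>
      (blwk A2.names (BrF A2) (blid A1 C1)).union (blwk A1.names (BrF A1) (blid A2 C2))
  | .and A1 A2, .or C1 C2 =>
      (blwk C2.names (BrF C2) (blid A1 C1)).union (blwk C1.names (BrF C1) (blid A2 C2))
  | _, _ => ⟨∅, fun _ _ => False⟩

/-! ## Simple name graphs -/

/-- A simple name graph. -/
structure NGraph : Type where
  verts : Set ℕ
  edges : Set (Sym2 ℕ)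

/-- Subgraph relation `H ⊑ G`. -/
def NGraph.Sub (H G : NGraph) : Prop := H.verts ⊆ G.verts ∧ H.edges ⊆ G.edges

def NGraph.union (G H : NGraph) : NGraph := ⟨G.verts ∪ H.verts, G.edges ∪ H.edges⟩

/-- Induced subgraph `G↾_S`. -/
def NGraph.restrict (G : NGraph) (S : Set ℕ) : NGraph :=
  ⟨G.verts ∩ S, {e ∈ G.edges | ∀ v ∈ e, v ∈ S}⟩

/-- Alternating paths between simple name graphs through an interface. -/
def NAltPath (G H : NGraph) (I : Set ℕ) (n : ℕ) (z : ℕ → ℕ) : Prop :=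
  0 < n ∧
  (∀ i < n, ∀ j < n, z i = z j → i = j) ∧
  (∀ i, 0 < i → i + 1 < n → z i ∈ I) ∧
  ((∀ i, i + 1 < n →
      (Even i → s(z i, z (i + 1)) ∈ G.edges) ∧ (¬ Even i → s(z i, z (i + 1)) ∈ H.edges)) ∨
   (∀ i, i + 1 < n →
      (Even i → s(z i, z (i + 1)) ∈ H.edges) ∧ (¬ Even i → s(z i, z (i + 1)) ∈ G.edges)))

/-- Composition of simple name graphs over an interface. -/
def NGraph.comp (G H : NGraph) (I : Set ℕ) : NGraph :=
  ⟨(G.verts ∪ H.verts) \ I,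
   {e | ∃ x y, x ≠ y ∧ x ∈ (G.verts ∪ H.verts) \ I ∧ y ∈ (G.verts ∪ H.verts) \ I ∧
        e = s(x, y) ∧ ∃ n z, NAltPath G H I n z ∧ z 0 = x ∧ z (n - 1) = y}⟩

/-- The identity graph `Id_{A,C}` on a pair of dual formulas. -/
def idg : NForm α → NForm α → NGraph
  | .atom x _, .atom y _ => ⟨{x, y}, {s(x, y)}⟩
  | .or A1 A2, .and C1 C2 => (idg A1 C1).union (idg A2 C2)
  | .and A1 A2, .or C1 C2 => (idg A1 C1).union (idg A2 C2)
  | _, _ => ⟨∅, ∅⟩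

/-- The edgeless (weakening) graph on the names of `Γ`. -/
def wkg (Γ : Finset (NForm α)) : NGraph := ⟨snames Γ, ∅⟩

/-! ## Named GS4 derivations -/

/-- Named GS4 derivation trees. -/
inductive Deriv (α : Type) : Type
  | ax (Γ : Finset (NForm α)) (A C : NForm α)
  | cut (A : NForm α) (P Q : Deriv α)
  | sup (P Q : Deriv α)
  | orI (A B : NForm α) (P : Deriv α)
  | andI (A B : NForm α) (P Q : Deriv α)

/-- Conclusion of a derivation tree. -/
def concl : Deriv α → Finset (NForm α)
  | .ax Γ A C => insert A (insert C Γ)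
  | .cut A P _ => (concl P).erase A
  | .sup P _ => concl P
  | .orI A B P => insert (NForm.or A B) (((concl P).erase A).erase B)
  | .andI A B P _ => insert (NForm.and A B) ((concl P).erase A)

/-- Well-formedness of derivation trees w.r.t. the atom involution `bar`:
each rule is applied correctly to sharing-free named sequents. -/
def WF (bar : α → α) : Deriv α → Prop
  | .ax Γ A C =>
      A.shape = (negF bar C).shape ∧
      A.sharingFree ∧ C.sharingFree ∧ SFSet Γ ∧
      Disjoint A.names C.names ∧
      Disjoint A.names (snames Γ) ∧ Disjoint C.names (snames Γ)
  | .cut A P Q =>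
      WF bar P ∧ WF bar Q ∧
      ∃ Γ : Finset (NForm α), A ∉ Γ ∧ negF bar A ∉ Γ ∧
        concl P = insert A Γ ∧ concl Q = insert (negF bar A) Γ ∧
        A.sharingFree ∧ SFSet Γ ∧ Disjoint A.names (snames Γ)
  | .sup P Q => WF bar P ∧ WF bar Q ∧ concl P = concl Q
  | .orI A B P =>
      WF bar P ∧
      ∃ Γ : Finset (NForm α), A ∉ Γ ∧ B ∉ Γ ∧ A ≠ B ∧
        concl P = insert A (insert B Γ) ∧
        A.sharingFree ∧ B.sharingFree ∧ SFSet Γ ∧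
        Disjoint A.names B.names ∧
        Disjoint A.names (snames Γ) ∧ Disjoint B.names (snames Γ)
  | .andI A B P Q =>
      WF bar P ∧ WF bar Q ∧
      ∃ Γ : Finset (NForm α), A ∉ Γ ∧ B ∉ Γ ∧
        concl P = insert A Γ ∧ concl Q = insert B Γ ∧
        A.sharingFree ∧ B.sharingFree ∧ SFSet Γ ∧
        Disjoint A.names B.names ∧
        Disjoint A.names (snames Γ) ∧ Disjoint B.names (snames Γ)

/-- A derivation is cut-free if it contains no cut rule. -/
def CutFree : Deriv α → Prop
  | .ax _ _ _ => True
  | .cut _ _ _ => False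
  | .sup P Q => CutFree P ∧ CutFree Q
  | .orI _ _ P => CutFree P
  | .andI _ _ P Q => CutFree P ∧ CutFree Q

/-- The branch-labeled axiom graph `⟨⟨P⟩⟩` of a derivation. -/
def blaxg : Deriv α → BLGraph
  | .ax Γ A C => blwk (snames Γ) (BrS Γ) (blid A C)
  | .cut A P Q => BLGraph.comp (blaxg P) (blaxg Q) A.names
  | .sup P Q => (blaxg P).union (blaxg Q)
  | .orI _ _ P => blaxg P
  | .andI _ _ P Q => (blaxg P).union (blaxg Q)

/-- The (simple) axiom graph `⟦P⟧` of a derivation. -/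
def axg : Deriv α → NGraph
  | .ax Γ A C => (wkg Γ).union (idg A C)
  | .cut A P Q => NGraph.comp (axg P) (axg Q) A.names
  | .sup P Q => (axg P).union (axg Q)
  | .orI _ _ P => axg P
  | .andI _ _ P Q => (axg P).union (axg Q)

/-! ## Inversion and isolation -/

/-- Inversion of a disjunction `D ∨ E` in the conclusion. -/
def inv (D E : NForm α) : Deriv α → Deriv α
  | .ax Γ A C =>
      if A = NForm.or D E then
        match C with
        | .and C1 C2 =>
            .andI C1 C2 (.ax (insert E Γ) D C1) (.ax (insert D Γ) E C2)
        | _ => .ax Γ A C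
      else if C = NForm.or D E then
        match A with
        | .and A1 A2 =>
            .andI A1 A2 (.ax (insert E Γ) A1 D) (.ax (insert D Γ) A2 E)
        | _ => .ax Γ A C
      else
        .ax (insert D (insert E (Γ.erase (NForm.or D E)))) A C
  | .cut A P Q => .cut A (inv D E P) (inv D E Q)
  | .sup P Q => .sup (inv D E P) (inv D E Q)
  | .orI A B P => if A = D ∧ B = E then P else .orI A B (inv D E P)
  | .andI A B P Q => .andI A B (inv D E P) (inv D E Q)

/-- Left inversion of a conjunction `D ∧ E` in the conclusion. -/
def invl (D E : NForm α) : Deriv α → Deriv α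
  | .ax Γ A C =>
      if A = NForm.and D E then
        match C with
        | .or C1 C2 => .orI C1 C2 (.ax (insert C2 Γ) D C1)
        | _ => .ax Γ A C
      else if C = NForm.and D E then
        match A with
        | .or A1 A2 => .orI A1 A2 (.ax (insert A2 Γ) A1 D)
        | _ => .ax Γ A C
      else
        .ax (insert D (Γ.erase (NForm.and D E))) A C
  | .cut A P Q => .cut A (invl D E P) (invl D E Q)
  | .sup P Q => .sup (invl D E P) (invl D E Q)
  | .orI A B P => .orI A B (invl D E P)
  | .andI A B P Q => if A = D ∧ B = E then P else .andI A B (invl D E P) (invl D E Q)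

/-- Right inversion of a conjunction `D ∧ E` in the conclusion. -/
def invr (D E : NForm α) : Deriv α → Deriv α
  | .ax Γ A C =>
      if A = NForm.and D E then
        match C with
        | .or C1 C2 => .orI C1 C2 (.ax (insert C1 Γ) E C2)
        | _ => .ax Γ A C
      else if C = NForm.and D E then
        match A with
        | .or A1 A2 => .orI A1 A2 (.ax (insert A1 Γ) A2 E)
        | _ => .ax Γ A C
      else
        .ax (insert E (Γ.erase (NForm.and D E))) A C
  | .cut A P Q => .cut A (invr D E P) (invr D E Q)
  | .sup P Q => .sup (invr D E P) (invr D E Q)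
  | .orI A B P => .orI A B (invr D E P)
  | .andI A B P Q => if A = D ∧ B = E then Q else .andI A B (invr D E P) (invr D E Q)

/-- Isolation of a non-atomic formula in the conclusion. -/
def isl : NForm α → Deriv α → Deriv α
  | .or A B, P => .orI A B (inv A B P)
  | .and A B, P => .andI A B (invl A B P) (invr A B P)
  | .atom _ _, P => P

/-- Totality of a bl-graph w.r.t. a sharing-free named sequent. -/
def Total (bar : α → α) (G : BLGraph) (Γ : Finset (NForm α)) : Prop :=
  G.verts = snames Γ ∧
  G.Br = BrS Γ ∧
  ∀ x y : ℕ, s(x, y) ∈ G.Edges →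
    ∀ a b : α, HasAtomS Γ x a → HasAtomS Γ y b → a = bar b

end GS4

/-!
Branches compose by the pointwise union `⊻` of families of sets: a disjunction has branches
`BrF A ⊻ BrF B`, and singling out a formula `A` disjoint from `Γ` gives
`BrS (insert A Γ) = BrF A ⊻ BrS Γ`. The `∨`- and `∧`-rules are then the associativity of `⊻` and its
distributivity over `∪`. For a cut on `A`, the first edge of an `X`-labeled alternating path
already exhibits `X` as a branch of one of the premises with the names of `A` removed, and this is a
branch of `Γ`.
-/

namespace GS4

open scoped SetFamily

variable {α : Type} {bar : α → α} {A A' B C : NForm α} {Γ : Finset (NForm α)}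

section Branches

theorem names_negF (bar : α → α) (A : NForm α) : (negF bar A).names = A.names := by
  induction A with
  | atom => rfl
  | or A B ihA ihB => simp only [negF, NForm.names, ihA, ihB]
  | and A B ihA ihB => simp only [negF, NForm.names, ihA, ihB]

theorem brF_or (A B : NForm α) : BrF (.or A B) = BrF A ⊻ BrF B := by
  ext X
  simp only [BrF, Set.mem_ofPred_eq, Set.mem_sups, Set.sup_eq_union, eq_comm]

theorem subset_names_of_mem_brF {X : Set ℕ} (hX : X ∈ BrF A) : X ⊆ A.names := by
  induction A generalizing X with
  | atom x a => exact (Set.mem_singleton_iff.1 hX).subset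
  | or A B ihA ihB =>
    obtain ⟨Y, hY, Z, hZ, rfl⟩ := hX
    exact Set.union_subset_union (ihA hY) (ihB hZ)
  | and A B ihA ihB =>
    exact hX.elim (fun h ↦ (ihA h).trans Set.subset_union_left)
      fun h ↦ (ihB h).trans Set.subset_union_right

theorem snames_insert (A : NForm α) (Γ : Finset (NForm α)) :
    snames (insert A Γ) = A.names ∪ snames Γ := by
  simp only [snames, Finset.set_biUnion_insert]

theorem names_subset_snames (hA : A ∈ Γ) : A.names ⊆ snames Γ :=
  Set.subset_biUnion_of_mem (u := NForm.names) (Finset.mem_coe.2 hA)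

theorem disjoint_snames_insert (hAB : Disjoint A.names B.names)
    (hA : Disjoint A.names (snames Γ)) : Disjoint A.names (snames (insert B Γ)) := by
  rw [snames_insert]
  exact hAB.union_right hA

theorem brS_insert (hA : Disjoint A.names (snames Γ)) :
    BrS (insert A Γ) = BrF A ⊻ BrS Γ := by
  have hAB : ∀ B ∈ Γ, Disjoint A.names B.names := fun B hB ↦
    hA.mono_right (names_subset_snames hB)
  ext X
  simp only [BrS, snames_insert, Finset.forall_mem_insert, Set.mem_sups, Set.mem_ofPred_eq,
    Set.sup_eq_union]
  constructor
  · rintro ⟨hX, hXA, hXΓ⟩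
    refine ⟨X ∩ A.names, hXA, X \ A.names, ⟨Set.sdiff_subset_iff.2 hX, fun B hB ↦ ?_⟩,
      Set.inter_union_sdiff X A.names⟩
    rw [← Set.inter_sdiff_right_comm,
      ((hAB B hB).symm.mono_left Set.inter_subset_right).sdiff_eq_left]
    exact hXΓ B hB
  · rintro ⟨Y, hY, Z, ⟨hZ, hZΓ⟩, rfl⟩
    have hYA := subset_names_of_mem_brF hY
    refine ⟨Set.union_subset_union hYA hZ, ?_, fun B hB ↦ ?_⟩
    · rwa [Set.union_inter_distrib_right, Set.inter_eq_left.2 hYA,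
        (hA.symm.mono_left hZ).inter_eq, Set.union_empty]
    · rw [Set.union_inter_distrib_right, ((hAB B hB).mono_left hYA).inter_eq, Set.empty_union]
      exact hZΓ B hB

theorem sdiff_names_mem_brS {X : Set ℕ} (hA : Disjoint A.names (snames Γ))
    (hX : X ∈ BrS (insert A Γ)) : X \ A.names ∈ BrS Γ := by
  rw [brS_insert hA] at hX
  obtain ⟨Y, hY, Z, hZ, rfl⟩ := hX
  rwa [Set.sup_eq_union, Set.union_sdiff_distrib,
    Set.sdiff_eq_empty.2 (subset_names_of_mem_brF hY), Set.empty_union,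
    (hA.symm.mono_left hZ.1).sdiff_eq_left]

theorem snames_insert_or (A B : NForm α) (Γ : Finset (NForm α)) :
    snames (insert (.or A B) Γ) = snames (insert A (insert B Γ)) := by
  simp only [snames_insert, NForm.names, Set.union_assoc]

theorem brS_insert_or (hAB : Disjoint A.names B.names) (hA : Disjoint A.names (snames Γ))
    (hB : Disjoint B.names (snames Γ)) :
    BrS (insert (.or A B) Γ) = BrS (insert A (insert B Γ)) := by
  rw [brS_insert (disjoint_snames_insert hAB hA), brS_insert hB,
    brS_insert (A := .or A B) (hA.union_left hB), brF_or, Set.sups_assoc]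

theorem snames_insert_and (A B : NForm α) (Γ : Finset (NForm α)) :
    snames (insert (.and A B) Γ) = snames (insert A Γ) ∪ snames (insert B Γ) := by
  rw [snames_insert, snames_insert, snames_insert, NForm.names, Set.union_union_distrib_right]

theorem brS_insert_and (hA : Disjoint A.names (snames Γ)) (hB : Disjoint B.names (snames Γ)) :
    BrS (insert (.and A B) Γ) = BrS (insert A Γ) ∪ BrS (insert B Γ) := by
  rw [brS_insert hA, brS_insert hB, brS_insert (A := .and A B) (hA.union_left hB), BrF,
    Set.sups_union_left]

end Branches

section Graphs

/-- A bl-graph is *on* a vertex set `V` and a family `S` of branches if its vertices are exactly the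
elements of `V` and its labels belong to `S`. With the names and branches of a sequent for `V` and
`S`, this is the invariant relating an axiom graph to the conclusion of its derivation. -/
def BLGraph.IsOn (G : BLGraph) (V : Set ℕ) (S : Set (Set ℕ)) : Prop :=
  G.verts = V ∧ G.Br ⊆ S

variable {G H : BLGraph} {V W : Set ℕ} {S T : Set (Set ℕ)}

theorem BLGraph.IsOn.union (hG : G.IsOn V S) (hH : H.IsOn W T) :
    (G.union H).IsOn (V ∪ W) (S ∪ T) := by
  refine ⟨congrArg₂ (· ∪ ·) hG.1 hH.1, ?_⟩
  rintro X ⟨e, he | he⟩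
  · exact .inl (hG.2 ⟨e, he⟩)
  · exact .inr (hH.2 ⟨e, he⟩)

theorem BLGraph.IsOn.blwk (hG : G.IsOn V S) (W : Set ℕ) (T : Set (Set ℕ)) :
    (blwk W T G).IsOn (V ∪ W) (S ⊻ T) := by
  refine ⟨congrArg (· ∪ W) hG.1, ?_⟩
  rintro _ ⟨e, Y, Z, hY, hZ, rfl⟩
  exact Set.sup_mem_sups (hG.2 ⟨e, hY⟩) hZ

theorem BLGraph.br_comp_subset (G H : BLGraph) (I : Set ℕ) :
    (G.comp H I).Br ⊆ (· \ I) '' (G.Br ∪ H.Br) := by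
  rintro X ⟨_, n, z, ⟨hn, -, -, hz | hz⟩, -⟩
  all_goals obtain ⟨Y, hY, rfl⟩ := (hz 0 hn).1 Even.zero
  · exact ⟨Y, .inl ⟨_, hY⟩, rfl⟩
  · exact ⟨Y, .inr ⟨_, hY⟩, rfl⟩

theorem BLGraph.IsOn.comp (hG : G.IsOn V S) (hH : H.IsOn W T) (I : Set ℕ) :
    (G.comp H I).IsOn ((V ∪ W) \ I) ((· \ I) '' (S ∪ T)) :=
  ⟨congrArg₂ (fun V W ↦ (V ∪ W) \ I) hG.1 hH.1,
    (G.br_comp_subset H I).trans (Set.image_mono (Set.union_subset_union hG.2 hH.2))⟩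

theorem BLGraph.IsOn.cut (hA : Disjoint A.names (snames Γ)) (hA' : A'.names = A.names)
    (hG : G.IsOn (snames (insert A Γ)) (BrS (insert A Γ)))
    (hH : H.IsOn (snames (insert A' Γ)) (BrS (insert A' Γ))) :
    (G.comp H A.names).IsOn (snames Γ) (BrS Γ) := by
  obtain ⟨hverts, hBr⟩ := hG.comp hH A.names
  constructor
  · rw [hverts, snames_insert, snames_insert, hA', Set.union_self, Set.union_sdiff_left,
      hA.symm.sdiff_eq_left]
  · refine hBr.trans ?_
    rintro _ ⟨X, hX | hX, rfl⟩
    · exact sdiff_names_mem_brS hA hX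
    · rw [← hA'] at hA ⊢
      exact sdiff_names_mem_brS hA hX

theorem isOn_blid (hAC : A.shape = (negF bar C).shape) :
    (blid A C).IsOn (A.names ∪ C.names) (BrF A ⊻ BrF C) := by
  fun_induction blid A C with
  | case1 x a y b =>
    refine ⟨rfl, ?_⟩
    rintro _ ⟨e, -, rfl⟩
    exact Set.sup_mem_sups (Set.mem_singleton {x}) (Set.mem_singleton {y})
  | case2 A₁ A₂ C₁ C₂ ih₁ ih₂ =>
    obtain ⟨h₁, h₂⟩ := Shape.or.inj hAC
    have hnames : (NForm.or A₁ A₂).names ∪ (NForm.and C₁ C₂).names =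
        A₁.names ∪ C₁.names ∪ A₂.names ∪ (A₂.names ∪ C₂.names ∪ A₁.names) := by
      grind [NForm.names]
    have hBr : BrF (.or A₁ A₂) ⊻ BrF (.and C₁ C₂) =
        BrF A₁ ⊻ BrF C₁ ⊻ BrF A₂ ∪ BrF A₂ ⊻ BrF C₂ ⊻ BrF A₁ := by
      rw [brF_or, BrF, Set.sups_union_right, Set.sups_right_comm,
        Set.sups_comm (s := BrF A₁) (t := BrF A₂), Set.sups_right_comm (s := BrF A₂)]
    rw [hnames, hBr]
    exact ((ih₁ h₁).blwk A₂.names (BrF A₂)).union ((ih₂ h₂).blwk A₁.names (BrF A₁))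
  | case3 A₁ A₂ C₁ C₂ ih₁ ih₂ =>
    obtain ⟨h₁, h₂⟩ := Shape.and.inj hAC
    have hnames : (NForm.and A₁ A₂).names ∪ (NForm.or C₁ C₂).names =
        A₁.names ∪ C₁.names ∪ C₂.names ∪ (A₂.names ∪ C₂.names ∪ C₁.names) := by
      grind [NForm.names]
    have hBr : BrF (.and A₁ A₂) ⊻ BrF (.or C₁ C₂) =
        BrF A₁ ⊻ BrF C₁ ⊻ BrF C₂ ∪ BrF A₂ ⊻ BrF C₂ ⊻ BrF C₁ := by
      rw [brF_or, BrF, Set.sups_union_left, Set.sups_assoc, Set.sups_assoc,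
        Set.sups_comm (s := BrF C₂) (t := BrF C₁)]
    rw [hnames, hBr]
    exact ((ih₁ h₁).blwk C₂.names (BrF C₂)).union ((ih₂ h₂).blwk C₁.names (BrF C₁))
  | case4 A C => cases A <;> cases C <;> grind [negF, NForm.shape]

theorem isOn_blaxg_ax (hAC : A.shape = (negF bar C).shape) (hd : Disjoint A.names C.names)
    (hA : Disjoint A.names (snames Γ)) (hC : Disjoint C.names (snames Γ)) :
    (blaxg (.ax Γ A C)).IsOn (snames (insert A (insert C Γ))) (BrS (insert A (insert C Γ))) := by
  rw [snames_insert, snames_insert, brS_insert (disjoint_snames_insert hd hA), brS_insert hC,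
    ← Set.union_assoc, ← Set.sups_assoc]
  exact (isOn_blid hAC).blwk (snames Γ) (BrS Γ)

end Graphs

section Conclusions

variable {P Q : Deriv α}

theorem concl_cut (hA : A ∉ Γ) (hP : concl P = insert A Γ) : concl (.cut A P Q) = Γ := by
  rw [concl, hP, Finset.erase_insert hA]

theorem concl_orI (hA : A ∉ Γ) (hB : B ∉ Γ) (hAB : A ≠ B)
    (hP : concl P = insert A (insert B Γ)) :
    concl (.orI A B P) = insert (.or A B) Γ := by
  rw [concl, hP, Finset.erase_insert (by simp [hAB, hA]), Finset.erase_insert hB]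

theorem concl_andI (hA : A ∉ Γ) (hP : concl P = insert A Γ) :
    concl (.andI A B P Q) = insert (.and A B) Γ := by
  rw [concl, hP, Finset.erase_insert hA]

end Conclusions

end GS4

theorem GS4.blaxg_names_branches_general {α : Type} (bar : α → α) (P : GS4.Deriv α)
    (hP : GS4.WF bar P) :
    (GS4.blaxg P).verts = GS4.snames (GS4.concl P) ∧
    (GS4.blaxg P).Br ⊆ GS4.BrS (GS4.concl P) := by
  change (blaxg P).IsOn (snames (concl P)) (BrS (concl P))
  induction P with
  | ax Γ A C =>
    obtain ⟨hAC, -, -, -, hd, hdA, hdC⟩ := hP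
    exact isOn_blaxg_ax hAC hd hdA hdC
  | cut A P Q ihP ihQ =>
    obtain ⟨hP, hQ, Γ, hA, -, hcP, hcQ, -, -, hd⟩ := hP
    rw [concl_cut hA hcP]
    exact (hcP ▸ ihP hP).cut hd (names_negF bar A) (hcQ ▸ ihQ hQ)
  | sup P Q ihP ihQ =>
    obtain ⟨hP, hQ, hc⟩ := hP
    have hPQ := (ihP hP).union (hc ▸ ihQ hQ)
    rwa [Set.union_self, Set.union_self] at hPQ
  | orI A B P ihP =>
    obtain ⟨hP, Γ, hA, hB, hAB, hc, -, -, -, hd, hdA, hdB⟩ := hP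
    rw [concl_orI hA hB hAB hc, snames_insert_or, brS_insert_or hd hdA hdB, ← hc]
    exact ihP hP
  | andI A B P Q ihP ihQ =>
    obtain ⟨hP, hQ, Γ, hA, -, hcP, hcQ, -, -, -, -, hdA, hdB⟩ := hP
    rw [concl_andI hA hcP, snames_insert_and, brS_insert_and hdA hdB, ← hcP, ← hcQ]
    exact (ihP hP).union (ihQ hQ)

/-- the vertices of the branch-labeled axiom graph are the
names of the conclusion, and its branches are among those of the conclusion. -/
theorem GS4.blaxg_names_branches {α : Type} (bar : α → α)
    (hbar : Function.Involutive bar) (hfix : ∀ a, bar a ≠ a)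
    (P : GS4.Deriv α) (hP : GS4.WF bar P) :
    (GS4.blaxg P).verts = GS4.snames (GS4.concl P) ∧
    (GS4.blaxg P).Br ⊆ GS4.BrS (GS4.concl P) :=
  GS4.blaxg_names_branches_general bar P hP
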